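/- Let k be a field of characteristic 2 containing no primitive cube root of unity (i.e., every ω ∈ k with ω³ = 1 satisfies ω = 1), and let G = Q_8 be the quaternion group of order 8. Suppose M_0, M_1, M_2, M_3 are finite-dimensional kG-modules such that M_0 is the trivial module k and, for each i = 0, 1, 2, there is a short exact sequence 0 → M_{i+1} → P_i → M_i → 0 of kG-modules with P_i finite-dimensional projective. Then each M_i is endotrivial, the modules M_0, M_1, M_2, M_3 are pairwise not stably isomorphic, and every endotrivial kG-module is stably isomorphic to M_i for some i ∈ {0,1,2,3}. In particular, the group of endotrivial modules of Q_8 (the Picard group of StMod(kQ_8)) is cyclic of order 4. -/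

import Mathlib

open CategoryTheory CategoryTheory.Limits MonoidalCategory

/-- A representation `M` of `G` over `k` is *endotrivial* if it is finite-dimensional over `k`
and its `k`-linear endomorphism module, with the conjugation `G`-action, is isomorphic to the
direct sum of the trivial representation `k` and a projective. -/
def IsEndotrivial {k G : Type} [Field k] [Group G] (M : Rep k G) : Prop :=
  FiniteDimensional k M.V ∧
    ∃ P : Rep k G, Projective P ∧
      Nonempty (Rep.of (M.ρ.linHom M.ρ) ≅ Rep.trivial k G k ⊞ P)

/-- Two representations are *stably isomorphic* if they become isomorphic after adding
projective summands. -/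
def IsStablyIso {k G : Type} [Field k] [Group G] (M N : Rep k G) : Prop :=
  ∃ P Q : Rep k G, Projective P ∧ Projective Q ∧ Nonempty (M ⊞ P ≅ N ⊞ Q)

/-!
Let `X = θ - 1`, `Y = τ - 1` and `Z = z - 1` in `kQ₈`, where `z` is the central involution. The
homology `ker Z / im Z` of a module is the Tate cohomology of the centre. It vanishes exactly on the
projective modules; a finite-dimensional module is endotrivial exactly when it is a line; and a
homomorphism between two modules of this kind is a stable isomorphism as soon as it is nonzero on
these lines. Syzygies and cosyzygies preserve this kind of module.

Restricted to `⟨θ⟩`, such a module is stably `k` or the syzygy `Ω k`, and taking a syzygy exchanges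
the two cases. In the first case the line is spanned by the class of some `v` with `X v = 0`, and
then `Y v = Z (X s)` for some `s`. Modulo `im Z` and `v`, the operator `Y` acts on `s` and a
companion `t` as `X` times the companion matrix of `λ² + λ + 1`, up to two scalars `μ`, `β` whose
norm form `μ² + μ β + β²` is the obstruction. If it is nonzero, `v` can be corrected by an element
of `im Z` to an invariant vector, so that `k → M` is a stable isomorphism. If it vanishes, then
`μ = β = 0`, as `k` has no primitive cube root of unity, and `s`, `t` define a stable isomorphism
`Ω² k → M`. Hence every endotrivial module is stably `Ωⁱ k` for some `i ≤ 3`. These four are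
distinct: parity is seen on `⟨θ⟩`, and `Ω² k` has no invariant vector with a nonzero class.
-/

universe u

namespace Q8Rep

/-- An identification of `G` with the quaternion group of order `8`. Carrying it as a class lets the
operators `X`, `Y`, `Z` below be written without naming the isomorphism. -/
class QuaternionStructure (G : Type*) [Group G] where
  equiv : G ≃* QuaternionGroup 2

section Operators

variable {k G : Type u} [Field k] [Group G] [QuaternionStructure G]

variable (G) in
/-- The generator `θ` of `Q₈`. -/
def i : G := QuaternionStructure.equiv.symm (.a 1 : QuaternionGroup 2)

variable (G) in
/-- The generator `τ` of `Q₈`. -/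
def j : G := QuaternionStructure.equiv.symm (.xa 0 : QuaternionGroup 2)

variable (G) in
/-- The central involution `θ² = τ²` of `Q₈`. -/
def z : G := QuaternionStructure.equiv.symm (.a 2 : QuaternionGroup 2)

lemma i_mul_i : i G * i G = z G := by
  simp only [i, z, ← map_mul]
  congr 1

lemma j_mul_j : j G * j G = z G := by
  simp only [j, z, ← map_mul]
  congr 1

lemma z_mul_z : z G * z G = 1 := by
  rw [z, ← map_mul, ← map_one (QuaternionStructure.equiv (G := G)).symm]
  congr 1

lemma j_mul_i : j G * i G = z G * (i G * j G) := by
  simp only [i, j, z, ← map_mul]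
  congr 1

/-- The action of `θ - 1 ∈ kQ₈`; as all fields here have characteristic two, it is written
`θ + 1`. -/
def X {M : Rep k G} : M →ₗ[k] M := M.ρ (i G) + 1

/-- The action of `τ - 1 ∈ kQ₈`, written `τ + 1`. -/
def Y {M : Rep k G} : M →ₗ[k] M := M.ρ (j G) + 1

/-- The action of `z - 1 ∈ kQ₈`, written `z + 1`, for the central involution `z`. Its homology
`ker Z / im Z` is the Tate cohomology of the centre with coefficients in `M`. -/
def Z {M : Rep k G} : M →ₗ[k] M := M.ρ (z G) + 1

variable {M N : Rep k G}

lemma ρ_i (m : M) : M.ρ (i G) m = X m - m := by simp [X]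

lemma ρ_j (m : M) : M.ρ (j G) m = Y m - m := by simp [Y]

lemma ρ_z (m : M) : M.ρ (z G) m = Z m - m := by simp [Z]

@[simp]
lemma hom_X (f : M ⟶ N) (m : M) : f.hom (X m) = X (f.hom m) := by
  simp [X, Rep.hom_comm_apply]

@[simp]
lemma hom_Y (f : M ⟶ N) (m : M) : f.hom (Y m) = Y (f.hom m) := by
  simp [Y, Rep.hom_comm_apply]

@[simp]
lemma hom_Z (f : M ⟶ N) (m : M) : f.hom (Z m) = Z (f.hom m) := by
  simp [Z, Rep.hom_comm_apply]

lemma exists_Z_comp_comp_Z_eq_Z (M : Rep k G) : ∃ s : M →ₗ[k] M, ∀ m, Z (s (Z m)) = Z m := by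
  obtain ⟨r, hr⟩ := LinearMap.exists_rightInverse_of_surjective (Z (M := M)).rangeRestrict
    (LinearMap.range_rangeRestrict _)
  obtain ⟨s, hs⟩ := LinearMap.exists_extend r
  refine ⟨s, fun m ↦ ?_⟩
  have hsr : s (Z m) = r ((Z (M := M)).rangeRestrict m) :=
    LinearMap.congr_fun hs ((Z (M := M)).rangeRestrict m)
  rw [hsr]
  exact congr(($hr (Z.rangeRestrict m)).1)

variable [CharP k 2]

section CharTwo

omit [QuaternionStructure G]

@[simp]
lemma add_self (m : M) : m + m = 0 := by
  rw [← two_smul k, CharTwo.two_eq_zero, zero_smul]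

@[simp]
lemma add_add_self (m n : M) : m + (m + n) = n := by
  rw [← add_assoc, add_self, zero_add]

@[simp]
lemma neg_eq_self (m : M) : -m = m :=
  neg_eq_of_add_eq_zero_left (add_self m)

@[simp]
lemma sub_eq_add (m n : M) : m - n = m + n := by
  rw [sub_eq_add_neg, neg_eq_self]

lemma add_eq_zero_iff {m n : M} : m + n = 0 ↔ m = n := by
  rw [← sub_eq_add, sub_eq_zero]

end CharTwo

@[simp]
lemma X_X (m : M) : X (X m) = Z m := by
  simp [X, Z, ← i_mul_i, add_comm, add_left_comm]

@[simp]
lemma Y_Y (m : M) : Y (Y m) = Z m := by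
  simp [Y, Z, ← j_mul_j, add_comm, add_left_comm]

@[simp]
lemma X_Z (m : M) : X (Z m) = Z (X m) := by
  rw [← X_X, X_X]

@[simp]
lemma Y_Z (m : M) : Y (Z m) = Z (Y m) := by
  rw [← Y_Y, Y_Y]

@[simp]
lemma Z_Z (m : M) : Z (Z m) = 0 := by
  simp [Z, ← Module.End.mul_apply, ← map_mul, z_mul_z, add_comm]

@[simp]
lemma Y_X (m : M) : Y (X m) = X (Y m) + Z m + Z (X m) + Z (Y m) + Z (X (Y m)) := by
  have h : M.ρ (j G) (M.ρ (i G) m) = M.ρ (z G) (M.ρ (i G) (M.ρ (j G) m)) := by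
    simp only [← Module.End.mul_apply, ← map_mul, j_mul_i]
  calc Y (X m) = X (Y m) + Z (M.ρ (i G) (M.ρ (j G) m)) := by
        simp [X, Y, Z, h, add_comm, add_left_comm]
    _ = _ := by simp [ρ_i, ρ_j, add_comm, add_left_comm]

-- Subtraction is rewritten with the coefficient `1 : k` so that `match_scalars` works over `k`
-- rather than over `ℤ`, leaving scalar identities that hold in characteristic two.
lemma relations :
    (∀ m : M, X (X m) = Z m) ∧ (∀ m : M, Y (Y m) = Z m) ∧ (∀ m : M, Z (Z m) = 0) ∧
    (∀ m : M, X (Z m) = Z (X m)) ∧ (∀ m : M, Y (Z m) = Z (Y m)) ∧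
    (∀ m : M, Y (X m) = X (Y m) + Z m + Z (X m) + Z (Y m) + Z (X (Y m))) ∧
    (∀ m n : M, m - n = m + (1 : k) • n) :=
  ⟨X_X, Y_Y, Z_Z, X_Z, Y_Z, Y_X, by simp⟩

lemma X_Z_X_Y (m : M) : X (Z (X (Y m))) = 0 := by simp

lemma Y_Z_X_Y (m : M) : Y (Z (X (Y m))) = 0 := by simp

lemma Z_eq_zero_of_X_eq_zero {m : M} (h : X m = 0) : Z m = 0 := by
  rw [← X_X, h, map_zero]

lemma ρ_eq_self {m : M} (hX : X m = 0) (hY : Y m = 0) (g : G) : M.ρ g m = m := by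
  have hi : M.ρ (i G) m = m := by rw [ρ_i, hX, zero_sub, neg_eq_self]
  have hj : M.ρ (j G) m = m := by rw [ρ_j, hY, zero_sub, neg_eq_self]
  have hpow {x : G} (hx : M.ρ x m = m) (n : ℕ) : M.ρ (x ^ n) m = m := by
    rw [map_pow, Module.End.pow_apply, Function.iterate_fixed hx]
  obtain ⟨n, p, hg⟩ : ∃ n p : Fin 4, g = i G ^ (n : ℕ) * j G ^ (p : ℕ) := by
    have h : ∀ x : QuaternionGroup 2, ∃ n p : Fin 4, x = .a 1 ^ (n : ℕ) * .xa 0 ^ (p : ℕ) := by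
      decide
    obtain ⟨n, p, h⟩ := h (QuaternionStructure.equiv g)
    exact ⟨n, p, by rw [i, j, ← map_pow, ← map_pow, ← map_mul, ← h, MulEquiv.symm_apply_apply]⟩
  rw [hg, map_mul, Module.End.mul_apply, hpow hj, hpow hi]

end Operators

section Classes

variable {k G : Type u} [Field k] [Group G] [QuaternionStructure G] {M : Rep k G}

/-- `v` represents a nonzero class in `ker Z / im Z`, the Tate cohomology of the centre. -/
def IsEssential (v : M) : Prop :=
  Z v = 0 ∧ ∀ n, v ≠ Z n

/-- The class of `v` spans `ker Z / im Z`, the Tate cohomology of the centre. -/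
def SpansTate (v : M) : Prop :=
  ∀ m : M, Z m = 0 → ∃ n, ∃ c : k, m = Z n + c • v

variable (M)

/-- The Tate cohomology of the centre of `Q₈` with coefficients in `M` vanishes. -/
def IsAcyclic : Prop :=
  ∀ m : M, Z m = 0 → ∃ n, m = Z n

/-- The Tate cohomology of the centre of `Q₈` with coefficients in `M` is one-dimensional. -/
def IsTateLine : Prop :=
  ∃ v : M, IsEssential v ∧ SpansTate v

/-- Among the modules with one-dimensional Tate cohomology, these are the ones whose restriction to
the cyclic subgroup `⟨θ⟩` of order `4` is stably `k`; the others restrict to the syzygy of `k`. -/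
def IsEven : Prop :=
  ∃ v : M, IsEssential v ∧ X v = 0

/-- `M` receives a homomorphism from `k` that is nonzero on the Tate cohomology of the centre. -/
def ReceivesTrivial : Prop :=
  ∃ v : M, IsEssential v ∧ X v = 0 ∧ Y v = 0

/-- `M` receives a homomorphism from the syzygy of `k` that is nonzero on the Tate cohomology of the
centre. The syzygy is the augmentation ideal: its generators `θ - 1` and `τ - 1` map to `a` and `b`,
the element `z - 1 = (θ - 1)² = (τ - 1)²` to `c`, and the last equation is the image of the
commutation relation `Y_X`. -/
def ReceivesSyzygy : Prop :=
  ∃ a b c : M, IsEssential c ∧ X a = c ∧ Y b = c ∧ X b + Y a = c + X c + Y c + X (Y c)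

/-- `M` receives a homomorphism from the second syzygy of `k` that is nonzero on the Tate cohomology
of the centre. The second syzygy is generated by elements `p`, `s` subject to `X p = Y s`. -/
def ReceivesSecondSyzygy : Prop :=
  ∃ p s : M, X p = Y s ∧ IsEssential (Y p + X s + Y s + Y (X s))

variable {M}

lemma SpansTate.exists_eq_add {v m n : M} (hv : SpansTate v) (h : Z m = Z n) :
    ∃ (l : M) (c : k), m = n + Z l + c • v := by
  obtain ⟨l, c, hl⟩ := hv (m - n) (by rw [map_sub, h, sub_self])
  exact ⟨l, c, by rw [add_assoc, ← hl, add_sub_cancel]⟩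

lemma SpansTate.isTateLine {u v : M} (hu : SpansTate u) (hZu : Z u = 0) (hv : IsEssential v) :
    IsTateLine M := by
  refine ⟨u, ⟨hZu, ?_⟩, hu⟩
  rintro n rfl
  obtain ⟨m, c, hm⟩ := hu v hv.1
  exact hv.2 (m + c • n) (by rw [hm, map_add, map_smul])

lemma exists_isEssential (hM : ¬ IsAcyclic M) : ∃ v : M, IsEssential v := by
  simpa [IsAcyclic, IsEssential] using hM

lemma IsEssential.exists_dual {v : M} (hv : IsEssential v) :
    ∃ l : M →ₗ[k] k, l v = 1 ∧ ∀ m, l (Z m) = 0 := by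
  obtain ⟨l, hl, hmap⟩ := Submodule.exists_dual_map_eq_bot_of_notMem
    (p := LinearMap.range (Z (M := M))) (x := v) (fun ⟨n, hn⟩ ↦ hv.2 n hn.symm) inferInstance
  refine ⟨(l v)⁻¹ • l, by simp [hl], fun m ↦ ?_⟩
  have hlm : l (Z m) ∈ (⊥ : Submodule k k) := hmap ▸ ⟨_, ⟨m, rfl⟩, rfl⟩
  simp [(Submodule.mem_bot k).1 hlm]

end Classes

section Companion

variable {k G : Type u} [Field k] [CharP k 2] [Group G] [QuaternionStructure G] {M : Rep k G}
  {s t a b v : M} {ε μ ν : k}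

-- Here `Y v = ε • Z (X s)` for a vector `v` spanning `ker Z / im Z` with `X v = 0`. Up to `im Z`
-- and multiples of `v`, the map `Y` takes `s`, `t` to `X t`, `X (s + t)`: it acts as `X` times the
-- companion matrix of `λ² + λ + 1`, and so the cube roots of unity enter.

lemma exists_Z_eq_Z_X (hXv : X v = 0) (hv : SpansTate v) {m : M} (h : Z (X m) = 0) :
    ∃ n, Z m = Z (X n) := by
  obtain ⟨n, c, hc⟩ := hv (X m) h
  exact ⟨n, by simpa [hXv] using congr(X $hc)⟩

lemma exists_Y_eq_X_add (hXv : X v = 0) (hv : SpansTate v) (hs : Z (X (Y s)) = 0) :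
    ∃ (s' t a : M) (μ : k), Z (X s') = Z (X s) ∧ Z (X (Y a)) = 0 ∧
      Y s' = X t + Z a + μ • v := by
  obtain ⟨t, ht⟩ := exists_Z_eq_Z_X hXv hv hs
  obtain ⟨a, μ, h⟩ := hv.exists_eq_add ht
  refine ⟨s + X a, t + Y a, X a + Y a + X (Y a), μ, by simp, by simp, ?_⟩
  linear_combination (norm := (simp only [map_add, relations]; match_scalars <;> grind)) h

lemma exists_Y_eq_X_add_add (hXv : X v = 0) (hYv : Y v = ε • Z (X s)) (hv : SpansTate v)
    (hYs : Y s = X t + Z a + μ • v) (ha : Z (X (Y a)) = 0) :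
    ∃ (b : M) (ν : k), Y t = X (s + t) + Z b + ν • v := by
  have hZv := Z_eq_zero_of_X_eq_zero hXv
  have hZYs : Z (Y s) = Z (X t) := by simp [hYs, hZv]
  have hXYt : Z (X (Y t)) = 0 := by simpa using congr(Y $hZYs).symm
  obtain ⟨r, hr⟩ := exists_Z_eq_Z_X hXv hv hXYt
  obtain ⟨b, ν, hb⟩ := hv.exists_eq_add hr
  have hZX : Z (X (r + s + t)) = 0 := by
    linear_combination (norm := (simp only [map_add, map_smul, relations]; match_scalars <;> grind))
      congr(X (Y $hYs)) + congr(Z $hb) + μ • congr(X $hYv) + ha + hXYt + ν • hZv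
  obtain ⟨n, hn⟩ := exists_Z_eq_Z_X hXv hv hZX
  obtain ⟨n', c, hn'⟩ := hv.exists_eq_add hn
  refine ⟨b + n + X n', ν, ?_⟩
  linear_combination (norm := (simp only [map_add, map_smul, relations]; match_scalars <;> grind))
    hb + congr(X $hn') + c • hXv

lemma exists_smul_Z_X_eq (hXv : X v = 0) (hYv : Y v = ε • Z (X s)) (hv : SpansTate v)
    (hYs : Y s = X t + Z a + μ • v) (ha : Z (X (Y a)) = 0)
    (hYt : Y t = X (s + t) + Z b + ν • v) :
    (∃ w, Z (X ((ε * μ) • t + (1 + ε * μ + ε * ν) • s)) = Z (X (Y w))) ∧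
    ∃ w, Z (X ((ε * μ) • (s + t) + (1 + ε * μ + ε * ν) • t)) = Z (X (Y w)) := by
  have hZv := Z_eq_zero_of_X_eq_zero hXv
  have hZYs : Z (Y s) = Z (X t) := by simp [hYs, hZv]
  have hZYt : Z (Y t) = Z (X (s + t)) := by simp [hYt, hZv]
  have hZYa : Z (Y a) = Z (X b + (1 + ε * μ) • X s) := by
    linear_combination (norm := (simp only [map_add, map_smul, relations]; match_scalars <;> grind))
      congr(Y $hYs) + congr(X $hYt) + hZYt + congr(X $hZYt) + μ • hYv + ν • hXv
  have hZYb : Z (Y b) = Z (X (a + b + t + (ε * ν) • s)) := by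
    linear_combination (norm := (simp only [map_add, map_smul, relations]; match_scalars <;> grind))
      congr(Y $hYt) + congr(X $hYs) + congr(X $hYt) + hZYs + congr(X $hZYs) + hZYt +
        congr(X $hZYt) + ν • hYv + (μ + ν) • hXv
  obtain ⟨c, d, hYa⟩ := hv.exists_eq_add hZYa
  obtain ⟨c', d', hYb⟩ := hv.exists_eq_add hZYb
  constructor
  · use b + c
    linear_combination (norm := (simp only [map_add, map_smul, relations]; match_scalars <;> grind))
      congr(X (Y $hYa)) + hZYb + (1 + ε * μ) • (hZYs + congr(X $hZYs)) + d • congr(X $hYv)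
  · use b + c'
    linear_combination (norm := (simp only [map_add, map_smul, relations]; match_scalars <;> grind))
      congr(X (Y $hYb)) + hZYa + hZYb + ha + hZYt + congr(X $hZYt) +
        (ε * ν) • (hZYs + congr(X $hZYs)) + d' • congr(X $hYv)

lemma exists_companion_system (hXv : X v = 0) (hYv : Y v = ε • Z (X s)) (hv : SpansTate v)
    (hs : Z (X (Y s)) = 0) :
    ∃ (s' t a b h : M) (μ ν β : k), Z (X s') = Z (X s) ∧ Y s' = X t + Z a + μ • v ∧
      Y t = X (s' + t) + Z b + ν • v ∧ β = 1 + ε * μ + ε * ν ∧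
      ((ε * μ) ^ 2 + ε * μ * β + β ^ 2) • Z (X s') = Z (X (Y h)) := by
  obtain ⟨s', t, a, μ, hs', ha, hYs⟩ := exists_Y_eq_X_add hXv hv hs
  rw [← hs'] at hYv
  obtain ⟨b, ν, hYt⟩ := exists_Y_eq_X_add_add hXv hYv hv hYs ha
  obtain ⟨⟨w, hw⟩, w', hw'⟩ := exists_smul_Z_X_eq hXv hYv hv hYs ha hYt
  refine ⟨s', t, a, b, (ε * μ + (1 + ε * μ + ε * ν)) • w + (ε * μ) • w', μ, ν, _, hs', hYs, hYt,
    rfl, ?_⟩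
  linear_combination (norm := (simp only [map_add, map_smul, relations]; match_scalars <;> grind))
    (ε * μ + (1 + ε * μ + ε * ν)) • hw + (ε * μ) • hw'

end Companion

section Acyclic

variable {k G : Type u} [Field k] [CharP k 2] [Group G] [QuaternionStructure G] {M : Rep k G}
  {m p q : M}

omit [CharP k 2] in
lemma IsAcyclic.spansTate_zero (h : IsAcyclic M) : SpansTate (0 : M) := by
  intro m hm
  obtain ⟨n, rfl⟩ := h m hm
  exact ⟨n, 0, by simp⟩

lemma IsAcyclic.exists_eq_X (h : IsAcyclic M) (hm : Z (X m) = 0) : ∃ n, m = X n := by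
  obtain ⟨n, hn⟩ := exists_Z_eq_Z_X (map_zero X) h.spansTate_zero hm
  obtain ⟨l, c, hl⟩ := h.spansTate_zero.exists_eq_add hn
  exact ⟨n + X l, by simp [hl]⟩

lemma IsAcyclic.exists_eq_Z_X (h : IsAcyclic M) (hm : X m = 0) : ∃ n, m = Z (X n) := by
  obtain ⟨n, rfl⟩ := h m (Z_eq_zero_of_X_eq_zero hm)
  obtain ⟨n', hn'⟩ := h (X n) (by rw [← X_Z, hm])
  exact ⟨n', by rw [← X_X n, hn', X_Z]⟩

lemma IsAcyclic.exists_eq_Z_Y (h : IsAcyclic M) (hm : Y m = 0) : ∃ n, m = Z (Y n) := by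
  obtain ⟨n, rfl⟩ := h m (by rw [← Y_Y, hm, map_zero])
  obtain ⟨n', hn'⟩ := h (Y n) (by rw [← Y_Z, hm])
  exact ⟨n', by rw [← Y_Y n, hn', Y_Z]⟩

lemma IsAcyclic.exists_Z_X_eq (h : IsAcyclic M) (hm : Z (X (Y m)) = 0) :
    ∃ n, Z (X m) = Z (X (Y n)) := by
  obtain ⟨s, t, a, b, n, μ, ν, β, hs, -, -, hβ, hn⟩ :=
    exists_companion_system (ε := 0) (map_zero X) (by simp) h.spansTate_zero hm
  exact ⟨n, by simpa [hβ, hs] using hn⟩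

lemma IsAcyclic.exists_eq_X_add_Y (h : IsAcyclic M) (hm : Z (X (Y m)) = 0) :
    ∃ n n', m = X n + Y n' := by
  obtain ⟨n', hn'⟩ := h.exists_Z_X_eq hm
  obtain ⟨n, hn⟩ := h.exists_eq_X (m := m - Y n') (by rw [map_sub, map_sub, hn', sub_self])
  exact ⟨n, n', by rw [← hn, sub_add_cancel]⟩

lemma IsAcyclic.exists_eq_Z_X_Y (h : IsAcyclic M) (hX : X m = 0) (hY : Y m = 0) :
    ∃ n, m = Z (X (Y n)) := by
  obtain ⟨n, rfl⟩ := h.exists_eq_Z_X hX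
  exact h.exists_Z_X_eq (by simpa using hY)

lemma IsAcyclic.exists_eq_Z_X_and_eq_Z_Y (h : IsAcyclic M) (hp : X p = 0) (hq : Y q = 0)
    (hpq : X q = Y p) : ∃ n, p = Z (X n) ∧ q = Z (Y n) := by
  obtain ⟨a, rfl⟩ := h.exists_eq_Z_X hp
  obtain ⟨b, rfl⟩ := h.exists_eq_Z_Y hq
  obtain ⟨r, s, hrs⟩ := h.exists_eq_X_add_Y (m := a + b) (by simpa [add_eq_zero_iff] using hpq.symm)
  have hrs' : a + X r = b + Y s := by
    linear_combination (norm := (simp only [relations]; match_scalars <;> grind)) hrs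
  exact ⟨a + X r, by simp, by simp [hrs']⟩

-- These solutions are the ones that `Y_X` provides.
lemma IsAcyclic.exists_of_X_eq_Y (h : IsAcyclic M) (hpq : X p = Y q) :
    ∃ r s, p = X r + Y s + X s + Z s + X (Y s) + X (Y (X s)) ∧ q = Y r + X s := by
  obtain ⟨s, r, rfl⟩ := h.exists_eq_X_add_Y (m := q)
    (by linear_combination (norm := simp) congr(Z (X $hpq)) + congr(Z (X (Y $hpq))))
  obtain ⟨n, hn⟩ := h.exists_eq_Z_X
    (m := p + (X r + Y s + X s + Z s + X (Y s) + X (Y (X s)))) (by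
      linear_combination (norm := (simp only [map_add, relations]; match_scalars <;> grind)) hpq)
  refine ⟨r + X n + Y n + Y (X n) + Z n + Z (X n), s + Y n, ?_, ?_⟩
  · linear_combination (norm := (simp only [map_add, relations]; match_scalars <;> grind)) hn
  · linear_combination (norm := (simp only [map_add, relations]; match_scalars <;> grind))

end Acyclic

section TateLine

variable {k G : Type u} [Field k] [CharP k 2] [Group G] [QuaternionStructure G] {M : Rep k G}
  {s t a b n v : M}

lemma IsEssential.add_Z (hv : IsEssential v) (n : M) : IsEssential (v + Z n) := by
  refine ⟨by simp [hv.1], fun l hl ↦ hv.2 (l + n) ?_⟩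
  rw [map_add, ← hl, add_assoc, add_self, add_zero]

omit [CharP k 2] in
lemma IsEssential.eq_zero_of_smul_eq {c : k} (hv : IsEssential v) (h : c • v = Z n) : c = 0 := by
  by_contra hc
  exact hv.2 (c⁻¹ • n) (by rw [map_smul, ← h, inv_smul_smul₀ hc])

omit [CharP k 2] in
lemma IsTateLine.spansTate (hM : IsTateLine M) (hv : IsEssential v) : SpansTate v := by
  obtain ⟨v₀, -, hv₀⟩ := hM
  obtain ⟨n₀, c₀, rfl⟩ := hv₀ v hv.1
  have hc₀ : c₀ ≠ 0 := by
    rintro rfl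
    exact hv.2 n₀ (by simp)
  intro m hm
  obtain ⟨n, c, rfl⟩ := hv₀ m hm
  refine ⟨n - (c / c₀) • n₀, c / c₀, ?_⟩
  rw [map_sub, map_smul, smul_add, smul_smul, div_mul_cancel₀ c hc₀]
  abel

lemma exists_X_eq_Z (hv : IsEssential v) (hspan : SpansTate v) : ∃ n, X v = Z n := by
  obtain ⟨n, c, hn⟩ := hspan (X v) (by rw [← X_Z, hv.1, map_zero])
  have hc : (c * c) • v = Z (X n + c • n) := by
    linear_combination (norm := (simp only [map_add, map_smul, relations]; match_scalars <;> grind))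
      congr(X $hn) + c • hn + hv.1
  obtain rfl : c = 0 := mul_self_eq_zero.1 (hv.eq_zero_of_smul_eq hc)
  exact ⟨n, by simpa using hn⟩

lemma exists_Y_eq_Z_X (hXv : X v = 0) (hv : IsEssential v) (hspan : SpansTate v) :
    ∃ s, Y v = Z (X s) ∧ Z (X (Y s)) = 0 := by
  have hYZv : Z (Y v) = 0 := by rw [← Y_Z, hv.1, map_zero]
  have hXYv : X (Y v) = 0 := by simpa [hXv, hv.1, hYZv, ← X_Z] using (Y_X v).symm
  obtain ⟨n, c, hn⟩ := hspan (Y v) hYZv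
  have hZXn : Z (X n) = 0 := by simpa [hXv, hXYv] using congr(X $hn).symm
  obtain ⟨s, hs⟩ := exists_Z_eq_Z_X hXv hspan hZXn
  rw [hs] at hn
  have hc : (c * c) • v = Z (X (Y s) + c • X s) := by
    linear_combination (norm := (simp only [map_add, map_smul, relations]; match_scalars <;> grind))
      congr(Y $hn) + c • hn + hv.1
  obtain rfl : c = 0 := mul_self_eq_zero.1 (hv.eq_zero_of_smul_eq hc)
  exact ⟨s, by simpa using hn, by simpa using hc.symm⟩

lemma receivesTrivial_of_Y_eq (hXv : X v = 0) (hv : IsEssential v) (hYv : Y v = Z (X (Y n))) :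
    ReceivesTrivial M :=
  ⟨v + Z (X n), hv.add_Z _, by simp [hXv], by simp [hYv]⟩

lemma receivesSecondSyzygy_of_Y_eq (hXv : X v = 0) (hv : IsEssential v) (hspan : SpansTate v)
    (hYs : Y s = X t + Z a) (hYt : Y t = X (s + t) + Z b + v) : ReceivesSecondSyzygy M := by
  have hZYt : Z (Y t) = Z (X (s + t)) := by simp [hYt, hv.1]
  have hZYa : Z (Y a) = Z (X (b + s)) := by
    linear_combination (norm := (simp only [map_add, relations]; match_scalars <;> grind))
      congr(Y $hYs) + congr(X $hYt) + hZYt + congr(X $hZYt) + hXv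
  obtain ⟨c, d, hYa⟩ := hspan.exists_eq_add hZYa
  refine ⟨t + X a, s, by simp [hYs], ?_⟩
  convert hv.add_Z (Y a + X (Y a) + X s + Y s + X (Y s) + t + X c) using 1
  linear_combination (norm := (simp only [map_add, map_smul, relations]; match_scalars <;> grind))
    hYt + hYs + congr(X $hYs) + congr(X $hYa) + d • hXv

lemma eq_zero_of_quadratic_eq_zero (hk : ∀ ω : k, ω ^ 3 = 1 → ω = 1) {μ β : k}
    (h : μ ^ 2 + μ * β + β ^ 2 = 0) : μ = 0 ∧ β = 0 := by
  have hμ : μ = 0 := by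
    by_contra hμ
    have hω : β / μ = 1 := hk _ (by field_simp; linear_combination (β - μ) * h)
    rw [div_eq_one_iff_eq hμ] at hω
    grind
  exact ⟨hμ, by simpa [hμ] using h⟩

lemma IsTateLine.receivesTrivial_or_receivesSecondSyzygy (hk : ∀ ω : k, ω ^ 3 = 1 → ω = 1)
    (hM : IsTateLine M) (hM' : IsEven M) : ReceivesTrivial M ∨ ReceivesSecondSyzygy M := by
  obtain ⟨v, hv, hXv⟩ := hM'
  have hspan := hM.spansTate hv
  obtain ⟨s₀, hYv, hs₀⟩ := exists_Y_eq_Z_X hXv hv hspan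
  obtain ⟨s, t, a, b, h, μ, ν, β, hs, hYs, hYt, hβ, hh⟩ :=
    exists_companion_system (ε := 1) hXv (by rw [hYv, one_smul]) hspan hs₀
  rw [← hs] at hYv
  simp only [one_mul] at hβ hh
  by_cases hq : μ ^ 2 + μ * β + β ^ 2 = 0
  · obtain ⟨rfl, rfl⟩ := eq_zero_of_quadratic_eq_zero hk hq
    obtain rfl : ν = 1 := by grind
    exact .inr (receivesSecondSyzygy_of_Y_eq hXv hv hspan (by simpa using hYs) (by simpa using hYt))
  · refine .inl (receivesTrivial_of_Y_eq (n := (μ ^ 2 + μ * β + β ^ 2)⁻¹ • h) hXv hv ?_)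
    rw [hYv, map_smul, map_smul, map_smul, ← hh, inv_smul_smul₀ hq]

end TateLine

section ShortExact

variable {k G : Type u} [Field k] [CharP k 2] [Group G] [QuaternionStructure G]
  {A P B : Rep k G} {f : A ⟶ P} {g : P ⟶ B} {w : f ≫ g = 0} {m : A} {x : P} {n : B}

omit [CharP k 2] [QuaternionStructure G] in
lemma hom_hom_eq_zero (w : f ≫ g = 0) (m : A) : g.hom (f.hom m) = 0 :=
  congr(($w).hom m)

omit [CharP k 2] [QuaternionStructure G] in
lemma exists_hom_eq (hS : (ShortComplex.mk f g w).ShortExact) (hx : g.hom x = 0) :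
    ∃ m, f.hom m = x :=
  (ShortComplex.moduleCat_exact_iff _).1 (hS.exact.map (forget₂ (Rep k G) (ModuleCat k))) x hx

omit [CharP k 2] [QuaternionStructure G] in
lemma hom_injective (hS : (ShortComplex.mk f g w).ShortExact) : Function.Injective f.hom :=
  (Rep.mono_iff_injective f).1 hS.mono_f

omit [CharP k 2] [QuaternionStructure G] in
lemma hom_surjective (hS : (ShortComplex.mk f g w).ShortExact) : Function.Surjective g.hom :=
  (Rep.epi_iff_surjective g).1 hS.epi_g

lemma exists_eq_Z_of_hom_eq_Z (hS : (ShortComplex.mk f g w).ShortExact) (hm : f.hom m = Z x)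
    (hx : g.hom x = Z n) : ∃ l, m = Z l := by
  obtain ⟨y, rfl⟩ := hom_surjective hS n
  obtain ⟨l, hl⟩ := exists_hom_eq hS (x := x + Z y) (by simp [hx])
  exact ⟨l, hom_injective hS (by simp [hl, hm])⟩

-- `m` is a value at `g.hom x` of the connecting homomorphism in Tate cohomology of the centre.
lemma isEssential_iff_isEssential_hom (hS : (ShortComplex.mk f g w).ShortExact)
    (hP : IsAcyclic P) (hm : f.hom m = Z x) : IsEssential m ↔ IsEssential (g.hom x) := by
  refine ⟨fun h ↦ ⟨?_, fun n hn ↦ ?_⟩, fun h ↦ ⟨hom_injective hS (by simp [hm]), ?_⟩⟩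
  · rw [← hom_Z, ← hm, hom_hom_eq_zero w]
  · obtain ⟨l, hl⟩ := exists_eq_Z_of_hom_eq_Z hS hm hn
    exact h.2 l hl
  · rintro l rfl
    obtain ⟨y, hy⟩ := hP (x - f.hom l) (by rw [map_sub, ← hm, hom_Z, sub_self])
    exact h.2 (g.hom y) (by rw [← hom_Z, ← hy, map_sub, hom_hom_eq_zero w, sub_zero])

omit [CharP k 2] in
lemma exists_hom_eq_and_hom_eq_Z (hS : (ShortComplex.mk f g w).ShortExact) (hn : Z n = 0) :
    ∃ x m, g.hom x = n ∧ f.hom m = Z x := by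
  obtain ⟨x, rfl⟩ := hom_surjective hS n
  obtain ⟨m, hm⟩ := exists_hom_eq hS (x := Z x) (by rw [hom_Z, hn])
  exact ⟨x, m, rfl, hm⟩

omit [CharP k 2] in
lemma exists_hom_eq_Z (hP : IsAcyclic P) (hm : Z m = 0) : ∃ x, f.hom m = Z x :=
  hP _ (by rw [← hom_Z, hm, map_zero])

end ShortExact

section Syzygy

variable {k G : Type u} [Field k] [CharP k 2] [Group G] [QuaternionStructure G] {A B C : Rep k G}

/-- `A` is a syzygy of `B`: it is the kernel of an epimorphism onto `B` from an acyclic, that is,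
projective module. -/
def IsSyzygy (A B : Rep k G) : Prop :=
  ∃ (P : Rep k G) (f : A ⟶ P) (g : P ⟶ B) (w : f ≫ g = 0),
    IsAcyclic P ∧ (ShortComplex.mk f g w).ShortExact

namespace IsSyzygy

lemma isTateLine_left (h : IsSyzygy A B) (hB : IsTateLine B) : IsTateLine A := by
  obtain ⟨P, f, g, w, hP, hS⟩ := h
  obtain ⟨v, hv, hspan⟩ := hB
  obtain ⟨x, m, rfl, hm⟩ := exists_hom_eq_and_hom_eq_Z hS hv.1
  refine ⟨m, (isEssential_iff_isEssential_hom hS hP hm).2 hv, fun m' hm' ↦ ?_⟩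
  obtain ⟨x', hx'⟩ := exists_hom_eq_Z (f := f) hP hm'
  obtain ⟨n, c, hn⟩ := hspan (g.hom x') (by rw [← hom_Z, ← hx', hom_hom_eq_zero w])
  obtain ⟨l, hl⟩ := exists_eq_Z_of_hom_eq_Z hS (m := m' - c • m) (x := x' - c • x) (n := n)
    (by rw [map_sub, map_smul, hm, hx', map_sub, map_smul])
    (by rw [map_sub, map_smul, hn, add_sub_cancel_right])
  exact ⟨l, c, by rw [← hl, sub_add_cancel]⟩

lemma isTateLine_right (h : IsSyzygy A B) (hA : IsTateLine A) : IsTateLine B := by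
  obtain ⟨P, f, g, w, hP, hS⟩ := h
  obtain ⟨v, hv, hspan⟩ := hA
  obtain ⟨x, hx⟩ := exists_hom_eq_Z (f := f) hP hv.1
  refine ⟨g.hom x, (isEssential_iff_isEssential_hom hS hP hx).1 hv, fun n hn ↦ ?_⟩
  obtain ⟨x', m', rfl, hm'⟩ := exists_hom_eq_and_hom_eq_Z hS hn
  obtain ⟨l, c, rfl⟩ := hspan m' (hom_injective hS (by simp [hm']))
  obtain ⟨y, hy⟩ := hP (x' - f.hom l - c • x) (by
    rw [map_sub, map_sub, map_smul, ← hm', ← hx, map_add, map_smul, hom_Z]; abel)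
  refine ⟨g.hom y, c, ?_⟩
  rw [← hom_Z, ← hy, map_sub, map_sub, map_smul, hom_hom_eq_zero w, sub_zero, sub_add_cancel]

lemma not_isEven (h : IsSyzygy A B) (hB : IsTateLine B) (hA' : IsEven A) : ¬ IsEven B := by
  have hA := h.isTateLine_left hB
  obtain ⟨P, f, g, w, hP, hS⟩ := h
  rintro ⟨v, hv, hXv⟩
  obtain ⟨v', hv', hXv'⟩ := hA'
  obtain ⟨x, hx⟩ := exists_hom_eq_Z (f := f) hP hv'.1
  obtain ⟨n, c, hn⟩ := hB.spansTate hv (g.hom x) (by rw [← hom_Z, ← hx, hom_hom_eq_zero w])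
  obtain ⟨y, rfl⟩ := hom_surjective hS n
  obtain ⟨u, hu⟩ := exists_hom_eq hS (x := X (x + Z y)) (by simp [hn, hXv])
  have hXu : X u = v' := hom_injective hS (by simp [hu, hx])
  obtain ⟨l, d, hl⟩ := hA.spansTate hv' u (by rw [← X_X, hXu, hXv'])
  exact hv'.2 (X l) (by rw [← hXu, hl, map_add, map_smul, hXv', smul_zero, add_zero, X_Z])

lemma isEven_or_isEven (h : IsSyzygy A B) (hB : IsTateLine B) : IsEven A ∨ IsEven B := by
  obtain ⟨P, f, g, w, hP, hS⟩ := h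
  obtain ⟨v, hv, hspan⟩ := hB
  obtain ⟨n, hn⟩ := exists_X_eq_Z hv hspan
  have hX : X (v + X n) = 0 := by simp [hn]
  by_cases hb : ∃ b, v + X n = Z b
  · obtain ⟨b, hb⟩ := hb
    obtain ⟨x, m, rfl, hm⟩ := exists_hom_eq_and_hom_eq_Z hS hv.1
    obtain ⟨p, rfl⟩ := hom_surjective hS n
    obtain ⟨y, rfl⟩ := hom_surjective hS b
    obtain ⟨u, hu⟩ := exists_hom_eq hS (x := x + X p + Z y) (by simp [hb])
    refine .inl ⟨m + Z u, ((isEssential_iff_isEssential_hom hS hP hm).2 hv).add_Z u,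
      hom_injective hS ?_⟩
    rw [hom_X, map_add, hm, hom_Z, hu]
    simp
  · simp only [not_exists] at hb
    exact .inr ⟨_, ⟨Z_eq_zero_of_X_eq_zero hX, hb⟩, hX⟩

lemma receivesSyzygy_left (h : IsSyzygy A B) (hB : ReceivesTrivial B) : ReceivesSyzygy A := by
  obtain ⟨P, f, g, w, hP, hS⟩ := h
  obtain ⟨v, hv, hX, hY⟩ := hB
  obtain ⟨x, rfl⟩ := hom_surjective hS v
  obtain ⟨a, ha⟩ := exists_hom_eq hS (x := X x) (by rw [hom_X, hX])
  obtain ⟨b, hb⟩ := exists_hom_eq hS (x := Y x) (by rw [hom_Y, hY])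
  obtain ⟨c, hc⟩ := exists_hom_eq hS (x := Z x) (by rw [hom_Z, hv.1])
  refine ⟨a, b, c, (isEssential_iff_isEssential_hom hS hP hc).2 hv, hom_injective hS ?_,
    hom_injective hS ?_, hom_injective hS ?_⟩
  · simp [ha, hc]
  · simp [hb, hc]
  · simp [ha, hb, hc, add_assoc]

lemma receivesTrivial_right (h : IsSyzygy A B) (hA : ReceivesSyzygy A) : ReceivesTrivial B := by
  obtain ⟨P, f, g, w, hP, hS⟩ := h
  obtain ⟨a, b, c, hc, hXa, hYb, hab⟩ := hA
  obtain ⟨x, hx⟩ := exists_hom_eq_Z (f := f) hP hc.1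
  have hfXa : X (f.hom a) = Z x := by rw [← hom_X, hXa, hx]
  have hfYb : Y (f.hom b) = Z x := by rw [← hom_Y, hYb, hx]
  obtain ⟨y, hXy, hYy⟩ := hP.exists_eq_Z_X_and_eq_Z_Y (p := f.hom a + X x) (q := f.hom b + Y x)
    (by simp [hfXa]) (by simp [hfYb]) (by
      have h := congr(f.hom $hab)
      simp only [map_add, hom_X, hom_Y, hx] at h
      linear_combination (norm := (simp only [map_add, relations]; match_scalars <;> grind)) h)
  refine ⟨g.hom x + Z (g.hom y),
    ((isEssential_iff_isEssential_hom hS hP hx).1 hc).add_Z _, ?_, ?_⟩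
  · simpa [hom_hom_eq_zero w, add_eq_zero_iff] using congr(g.hom $hXy)
  · simpa [hom_hom_eq_zero w, add_eq_zero_iff] using congr(g.hom $hYy)

lemma receivesSyzygy_right (h : IsSyzygy A B) (hA : ReceivesSecondSyzygy A) :
    ReceivesSyzygy B := by
  obtain ⟨P, f, g, w, hP, hS⟩ := h
  obtain ⟨p, q, hpq, hv⟩ := hA
  obtain ⟨r, s, hp, hq⟩ := hP.exists_of_X_eq_Y (p := f.hom p) (q := f.hom q)
    (by rw [← hom_X, hpq, hom_Y])
  have hx : f.hom (Y p + X q + Y q + Y (X q)) = Z (X s + Y s) := by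
    simp only [map_add, hom_X, hom_Y, hp, hq]
    linear_combination (norm := (simp only [map_add, relations]; match_scalars <;> grind))
  have hgp := congr(g.hom $hp)
  have hgq := congr(g.hom $hq)
  simp only [hom_hom_eq_zero w, map_add, hom_X, hom_Y, hom_Z] at hgp hgq
  refine ⟨g.hom (r + X s + Y s + Y (X s)), g.hom (r + s), g.hom (X s + Y s),
    (isEssential_iff_isEssential_hom hS hP hx).1 hv, ?_, ?_, ?_⟩ <;>
  simp only [map_add, hom_X, hom_Y]
  · linear_combination (norm := (simp only [relations]; match_scalars <;> grind)) hgp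
  · linear_combination (norm := (simp only [relations]; match_scalars <;> grind)) hgq
  · linear_combination (norm := (simp only [map_add, relations]; match_scalars <;> grind)) hgp + hgq

lemma not_receivesTrivial (h : IsSyzygy A B) (h' : IsSyzygy B C) (hC : ∀ g (n : C), C.ρ g n = n) :
    ¬ ReceivesTrivial A := by
  have hX (n : C) : X n = 0 := by simp [X, hC]
  have hY (n : C) : Y n = 0 := by simp [Y, hC]
  obtain ⟨P, f, g, w, hP, hS⟩ := h
  obtain ⟨P', f', g', w', hP', hS'⟩ := h'
  rintro ⟨v, hv, hXv, hYv⟩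
  obtain ⟨x, hx⟩ := hP.exists_eq_Z_X_Y (m := f.hom v) (by rw [← hom_X, hXv, map_zero])
    (by rw [← hom_Y, hYv, map_zero])
  obtain ⟨a, b, hab⟩ := hP'.exists_eq_X_add_Y (m := f'.hom (g.hom x)) (by
    simp only [← hom_X, ← hom_Y, ← hom_Z, ← hx, hom_hom_eq_zero w, map_zero])
  obtain ⟨r, hr⟩ := exists_hom_eq hS' (x := Y a + X a + X (Y a) + X b) (by simp [hX, hY])
  obtain ⟨l, hl⟩ := exists_eq_Z_of_hom_eq_Z hS (x := X (Y x)) (n := r) hx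
    (hom_injective hS' (by simp [hr, hab, add_comm, add_left_comm]))
  exact hv.2 l hl

end IsSyzygy

end Syzygy

section InternalHom

variable {k G : Type u} [Field k] [Group G] {A B M : Rep k G}

variable (A B) in
/-- The space of `k`-linear maps from `A` to `B`, with the conjugation action of `G`. -/
abbrev linHom : Rep k G := Rep.of (A.ρ.linHom B.ρ)

variable [CharP k 2] [QuaternionStructure G]

-- `h` is a homotopy contracting `M` onto its Tate cohomology, spanned by the class of `v`.
lemma exists_contraction {v : M} {l : M →ₗ[k] k} (hlZ : ∀ m, l (Z m) = 0)
    (hl : ∀ m, Z m = 0 → ∃ n, m = Z n + l m • v) :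
    ∃ (h : M →ₗ[k] M) (l' : M →ₗ[k] k) (n : M), (∀ m, l' (Z m) = 0) ∧
      (∀ m, Z m = 0 → l' m = l m) ∧ ∀ m, m = Z (h m) + h (Z m) + l' m • (v + Z n) := by
  obtain ⟨s, hs⟩ := exists_Z_comp_comp_Z_eq_Z M
  refine ⟨s - Z ∘ₗ s ∘ₗ s, l - l ∘ₗ s ∘ₗ Z, s v, fun m ↦ by simp [hlZ], fun m hm ↦ by simp [hm],
    fun m ↦ ?_⟩
  obtain ⟨n, hn⟩ := hl (m + s (Z m)) (by rw [map_add, hs, add_self])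
  have hZn : Z (s (m + s (Z m))) = Z n + l (m + s (Z m)) • Z (s v) := by
    nth_rw 1 [hn]
    rw [map_add, map_smul, map_add, map_smul, hs]
  simp only [map_add] at hn hZn
  simp only [LinearMap.sub_apply, LinearMap.comp_apply]
  linear_combination (norm := (simp only [map_add, map_smul, relations]; match_scalars <;> grind))
    hn + hZn

lemma Z_linHom_apply (f : linHom A B) (m : A) :
    Z f m = Z (f m) + f (Z m) + Z (f (Z m)) := by
  have hz : (z G)⁻¹ = z G := inv_eq_of_mul_eq_one_left z_mul_z
  have h : Z f m = B.ρ (z G) (f (A.ρ (z G) m)) + f m := by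
    rw [Z, LinearMap.add_apply, LinearMap.add_apply, Rep.of_ρ, Representation.linHom_apply, hz]
    rfl
  rw [h, ρ_z, ρ_z]
  simp only [map_add, map_smul, relations]
  match_scalars <;> grind

lemma Z_comm {f : linHom A B} (hf : Z f = 0) (m : A) : f (Z m) = Z (f m) := by
  have h (m : A) : Z (f m) + f (Z m) + Z (f (Z m)) = 0 := by
    rw [← Z_linHom_apply, hf, LinearMap.zero_apply]
  have hZ : Z (f (Z m)) = 0 := by simpa using h (Z m)
  exact (add_eq_zero_iff.1 (by simpa [hZ] using h m)).symm

lemma Z_linHom_apply_of_Z_eq_zero (f : linHom A B) {m : A} (hm : Z m = 0) : Z f m = Z (f m) := by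
  rw [Z_linHom_apply, hm, map_zero, map_zero, add_zero, add_zero]

lemma exists_eq_Z_add_smulRight {h : A →ₗ[k] A} {l : A →ₗ[k] k} {v : A}
    (hid : ∀ m, m = Z (h m) + h (Z m) + l m • v) {f : linHom A B} (hf : Z f = 0) :
    ∃ g : linHom A B, f = Z g + l.smulRight (f v) := by
  let g : linHom A B := f ∘ₗ (h ∘ₗ A.ρ (z G))
  have hg (m : A) : g m = f (h (Z m)) + f (h m) := by simp [g, ρ_z]
  have hc := Z_comm hf
  refine ⟨g, LinearMap.ext fun m ↦ ?_⟩
  have hfm := congr(f $(hid m))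
  rw [LinearMap.add_apply, Z_linHom_apply]
  simp only [map_add, hc, map_smul] at hfm
  linear_combination (norm := (
    simp only [hg, LinearMap.smulRight_apply, map_add, map_zero, relations]
    match_scalars <;> grind)) hfm

lemma Z_smulRight {l : A →ₗ[k] k} (hlZ : ∀ m, l (Z m) = 0) (n : B) :
    Z (M := linHom A B) (l.smulRight n) = l.smulRight (Z n) := by
  refine LinearMap.ext fun m ↦ ?_
  rw [Z_linHom_apply]
  simp [hlZ]

protected lemma IsAcyclic.linHom (hA : IsAcyclic A) (B : Rep k G) : IsAcyclic (linHom A B) := by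
  intro f hf
  obtain ⟨h, l, n, hlZ, -, hid⟩ := exists_contraction (M := A) (v := 0) (l := 0) (by simp)
    (by simpa using fun m hm ↦ hA m hm)
  obtain ⟨g, hg⟩ := exists_eq_Z_add_smulRight hid hf
  have h0 : f (0 + Z n) = Z (f n) := by rw [zero_add, Z_comm hf]
  refine ⟨g + l.smulRight (f n), ?_⟩
  rw [map_add, Z_smulRight hlZ, ← h0, ← hg]

lemma IsTateLine.exists_homotopy (hA : IsTateLine A) :
    ∃ (h : A →ₗ[k] A) (l : A →ₗ[k] k) (v : A), IsEssential v ∧ l v = 1 ∧ (∀ m, l (Z m) = 0) ∧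
      ∀ m, m = Z (h m) + h (Z m) + l m • v := by
  obtain ⟨v, hv, hspan⟩ := hA
  obtain ⟨l, hlv, hlZ⟩ := hv.exists_dual
  obtain ⟨h, l', n, hl'Z, hl', hid⟩ := exists_contraction (v := v) hlZ fun m hm ↦ by
    obtain ⟨n, c, rfl⟩ := hspan m hm
    exact ⟨n, by simp [hlZ, hlv]⟩
  exact ⟨h, l', v + Z n, hv.add_Z n, by simp [hl' v hv.1, hlv, hl'Z], hl'Z, hid⟩

protected lemma IsTateLine.linHom (hA : IsTateLine A) (hB : IsTateLine B) :
    IsTateLine (linHom A B) := by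
  obtain ⟨h, l, v, hv, hlv, hlZ, hid⟩ := hA.exists_homotopy
  obtain ⟨w, hw, hspan⟩ := hB
  refine ⟨l.smulRight w, ⟨by simp [Z_smulRight hlZ, hw.1], fun g hg ↦ ?_⟩, fun f hf ↦ ?_⟩
  · refine hw.2 (g v) ?_
    rw [← Z_linHom_apply_of_Z_eq_zero g hv.1, ← hg]
    simp [hlv]
  · obtain ⟨g, hg⟩ := exists_eq_Z_add_smulRight hid hf
    obtain ⟨n, c, hn⟩ := hspan (f v) (by rw [← Z_comm hf, hv.1, map_zero])
    refine ⟨g + l.smulRight n, c, ?_⟩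
    have hfv : l.smulRight (f v) = l.smulRight (Z n) + c • l.smulRight w :=
      LinearMap.ext fun m ↦ by simp [hn, smul_comm (l m)]
    rw [map_add, Z_smulRight hlZ, add_assoc, ← hfv, ← hg]

lemma IsTateLine.of_linHom (hA : IsTateLine (linHom A A)) : IsTateLine A := by
  obtain ⟨f, hf, hspan⟩ := hA
  obtain ⟨v, hv⟩ := exists_isEssential fun h : IsAcyclic A ↦ by
    obtain ⟨g, hg⟩ := h.linHom A f hf.1
    exact hf.2 g hg
  obtain ⟨l, hlv, hlZ⟩ := hv.exists_dual
  refine SpansTate.isTateLine (u := f v) (fun m hm ↦ ?_) (by rw [← Z_comm hf.1, hv.1, map_zero]) hv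
  obtain ⟨g, c, hg⟩ := hspan (l.smulRight m) (by rw [Z_smulRight hlZ, hm, LinearMap.smulRight_zero])
  refine ⟨g v, c, ?_⟩
  rw [← Z_linHom_apply_of_Z_eq_zero g hv.1]
  simpa [hlv] using congr($hg v)

variable (A) in
omit [CharP k 2] [QuaternionStructure G] in
lemma linHom_id (g : G) : (linHom A A).ρ g LinearMap.id = LinearMap.id := by
  ext m
  simp [Representation.linHom_apply]

variable (A) in
lemma X_id : X (M := linHom A A) LinearMap.id = 0 := by
  rw [X, LinearMap.add_apply, linHom_id]
  exact add_self (M := linHom A A) _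

variable (A) in
lemma Y_id : Y (M := linHom A A) LinearMap.id = 0 := by
  rw [Y, LinearMap.add_apply, linHom_id]
  exact add_self (M := linHom A A) _

lemma IsEssential.id {v : A} (hv : IsEssential v) :
    IsEssential (M := linHom A A) LinearMap.id := by
  refine ⟨Z_eq_zero_of_X_eq_zero (X_id A), fun g hg ↦ hv.2 (g v) ?_⟩
  rw [← Z_linHom_apply_of_Z_eq_zero g hv.1, ← hg, LinearMap.id_apply]

end InternalHom

section Projective

variable {k G : Type u} [Field k] [Group G]

section

variable {A : Rep.{u} k G} (M : Rep.{u} k G)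

/-- Evaluation of linear maps at an invariant element, as a morphism of representations. -/
def evalHom {a : A} (ha : ∀ g, A.ρ g a = a) : linHom A M ⟶ M :=
  Rep.ofHom ⟨LinearMap.applyₗ a, fun g ↦ LinearMap.ext fun f ↦
    congr(M.ρ g (f $(by simpa using ha g⁻¹)))⟩

/-- The morphism `M ⟶ linHom A M` given by multiplication with an invariant functional. -/
def smulRightHom (l : A ⟶ Rep.trivial k G k) : M ⟶ linHom A M :=
  Rep.ofHom ⟨LinearMap.smulRightₗ l.hom.toLinearMap, fun g ↦ by
    ext m a
    have hl : l.hom (A.ρ g⁻¹ a) = l.hom a := Rep.hom_comm_apply l g⁻¹ a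
    simp [hl, Representation.linHom_apply]⟩

end

variable [CharP k 2] [QuaternionStructure G] {M P : Rep.{u} k G}

lemma isAcyclic_of_retraction (e : M →ₗ[k] M)
    (he : ∀ m, e m + M.ρ (z G) (e (M.ρ (z G) m)) = m) : IsAcyclic M := by
  intro m hm
  have hz : M.ρ (z G) m = m := by rw [ρ_z, hm, zero_sub, neg_eq_self]
  refine ⟨e m, ?_⟩
  nth_rw 1 [← he m]
  rw [hz, ρ_z, sub_eq_add, add_comm, add_assoc, add_self, add_zero]

/-- A section of the quotient by the centre, as a set of representatives. -/
def transversal : QuaternionGroup 2 → Bool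
  | .a n => n = 0 ∨ n = 1
  | .xa n => n = 0 ∨ n = 1

lemma transversal_a_two_mul : ∀ g, transversal (.a 2 * g) = !transversal g := by
  decide

variable (k G) in
lemma isAcyclic_leftRegular : IsAcyclic (Rep.leftRegular k G) := by
  let c (g : G) : Bool := transversal (QuaternionStructure.equiv g)
  have hc (g : G) : c (z G * g) = !c g := by
    simp [c, z, transversal_a_two_mul]
  let e := (MonoidAlgebra.coeffLinearEquiv k).symm.toLinearMap ∘ₗ
    Finsupp.lsum k (fun g ↦ if c g then Finsupp.lsingle (R := k) (M := k) g else 0) ∘ₗ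
    (MonoidAlgebra.coeffLinearEquiv (M := G) k).toLinearMap
  have he : e + Representation.leftRegular k G (z G) ∘ₗ e ∘ₗ
      Representation.leftRegular k G (z G) = LinearMap.id := by
    ext g : 3
    by_cases hg : c g <;> simp [e, hc, hg, ← mul_assoc, z_mul_z]
  exact isAcyclic_of_retraction e fun m ↦ congr($he m)

theorem IsAcyclic.projective (hM : IsAcyclic M) : Projective M := by
  obtain ⟨t, ht⟩ := (hM.linHom M).exists_eq_Z_X_Y (X_id M) (Y_id M)
  refine ⟨fun {E B} f π hπ ↦ ?_⟩
  obtain ⟨s, hs⟩ := LinearMap.exists_rightInverse_of_surjective π.hom.toLinearMap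
    (LinearMap.range_eq_top.2 ((Rep.epi_iff_surjective π).1 hπ))
  let f' : linHom M M ⟶ linHom M B := (Rep.ihom M).map f
  let π' : linHom M E ⟶ linHom M B := (Rep.ihom M).map π
  let r : linHom M E := s ∘ₗ f.hom.toLinearMap ∘ₗ t
  have hr : π'.hom r = f'.hom t := LinearMap.ext fun m ↦ congr($hs (f.hom (t m)))
  have hT : π'.hom (Z (X (Y r))) = f'.hom LinearMap.id := by
    rw [hom_Z, hom_X, hom_Y, hr, ht, hom_Z, hom_X, hom_Y]
  have hfix (g : G) : (linHom M E).ρ g (Z (X (Y r))) = Z (X (Y r)) :=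
    ρ_eq_self (X_Z_X_Y r) (Y_Z_X_Y r) g
  refine ⟨Rep.ofHom ((Z (X (Y r)) : linHom M E).intertwiningMap_of_isIntertwiningMap M.ρ E.ρ
    ((Representation.mem_linHom_invariants_iff_isIntertwining _).1 hfix).isIntertwining), ?_⟩
  ext m
  exact congr($hT m)

theorem isAcyclic_of_projective [Projective P] : IsAcyclic P := by
  let : Fintype G := Fintype.ofEquiv _ (QuaternionStructure.equiv (G := G)).symm.toEquiv
  let a := (Representation.leftRegular k G).norm (.single 1 1)
  let π : linHom (Rep.leftRegular k G) P ⟶ P :=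
    evalHom P (a := a) fun g ↦ Representation.self_norm_apply _ g _
  have hπ : Function.Surjective π.hom := fun m ↦ by
    let l : MonoidAlgebra k G →ₗ[k] k :=
      Finsupp.lapply 1 ∘ₗ (MonoidAlgebra.coeffLinearEquiv k).toLinearMap
    have hl : l a = 1 := by
      simp [l, a, Representation.norm]
    refine ⟨l.smulRight m, ?_⟩
    change l a • m = m
    rw [hl, one_smul]
  have : Epi π := (Rep.epi_iff_surjective π).2 hπ
  intro m hm
  obtain ⟨n, hn⟩ := (isAcyclic_leftRegular k G).linHom P
    ((Projective.factorThru (𝟙 P) π).hom m) (by rw [← hom_Z, hm, map_zero])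
  refine ⟨π.hom n, ?_⟩
  rw [← hom_Z, ← hn]
  exact congr(($(Projective.factorThru_comp (𝟙 P) π)).hom m).symm

/-- An embedding of `M` into an acyclic, that is, injective module. -/
noncomputable def embedding (M : Rep.{u} k G) : M ⟶ linHom (Rep.leftRegular k G) M :=
  smulRightHom M (Rep.leftRegularHom (Rep.trivial k G k) 1)

instance : Mono (embedding M) := by
  rw [Rep.mono_iff_injective]
  intro m n h
  have h1 (m : M) : (embedding M).hom m (.single 1 1) = m := by
    change (Rep.leftRegularHom (Rep.trivial k G k) 1).hom (.single 1 1) • m = m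
    rw [Rep.leftRegularHom_hom_single]
    simp
  rw [← h1 m, h, h1]

end Projective

section Stable

variable {k G : Type u} [Field k] [Group G] [QuaternionStructure G] {A B C P M : Rep.{u} k G}

/-- `φ` is injective on `ker Z / im Z`, the Tate cohomology of the centre. Between modules for which
this is a line, such a `φ` is a stable isomorphism. -/
def IsTateInjective (φ : A ⟶ B) : Prop :=
  ∀ v, IsEssential v → IsEssential (φ.hom v)

lemma IsEssential.of_hom {φ : A ⟶ B} {v : A} (hv : Z v = 0) (h : IsEssential (φ.hom v)) :
    IsEssential v := by
  refine ⟨hv, ?_⟩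
  rintro n rfl
  exact h.2 (φ.hom n) (hom_Z φ n)

lemma IsEssential.smul {v : A} {c : k} (hc : c ≠ 0) (hv : IsEssential v) : IsEssential (c • v) :=
  ⟨by rw [map_smul, hv.1, smul_zero], fun n hn ↦ hc (hv.eq_zero_of_smul_eq hn)⟩

namespace IsTateInjective

lemma comp {φ : A ⟶ B} {ψ : B ⟶ C} (hφ : IsTateInjective φ) (hψ : IsTateInjective ψ) :
    IsTateInjective (φ ≫ ψ) :=
  fun v hv ↦ hψ _ (hφ v hv)

lemma of_comp_eq_id {φ : A ⟶ B} {ψ : B ⟶ A} (h : φ ≫ ψ = 𝟙 A) : IsTateInjective φ := by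
  intro v hv
  refine IsEssential.of_hom (φ := ψ) (by rw [← hom_Z, hv.1, map_zero]) ?_
  have hψ : ψ.hom (φ.hom v) = v := congr(($h).hom v)
  rwa [hψ]

lemma biprod_inl (A P : Rep.{u} k G) : IsTateInjective (biprod.inl : A ⟶ A ⊞ P) :=
  .of_comp_eq_id biprod.inl_fst

lemma biprod_fst (hP : IsAcyclic P) : IsTateInjective (biprod.fst : A ⊞ P ⟶ A) := by
  intro v hv
  refine ⟨by rw [← hom_Z, hv.1, map_zero], fun n hn ↦ ?_⟩
  obtain ⟨p, hp⟩ := hP ((biprod.snd : A ⊞ P ⟶ P).hom v) (by rw [← hom_Z, hv.1, map_zero])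
  refine hv.2 ((biprod.inl : A ⟶ A ⊞ P).hom n + (biprod.inr : P ⟶ A ⊞ P).hom p) ?_
  rw [map_add, ← hom_Z, ← hom_Z, ← hn, ← hp]
  exact congr(($(biprod.total (X := A) (Y := P))).hom v).symm

protected lemma isEven {φ : A ⟶ B} (hφ : IsTateInjective φ) : IsEven A → IsEven B :=
  fun ⟨v, hv, hX⟩ ↦ ⟨φ.hom v, hφ v hv, by rw [← hom_X, hX, map_zero]⟩

protected lemma receivesTrivial {φ : A ⟶ B} (hφ : IsTateInjective φ) :
    ReceivesTrivial A → ReceivesTrivial B :=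
  fun ⟨v, hv, hX, hY⟩ ↦
    ⟨φ.hom v, hφ v hv, by rw [← hom_X, hX, map_zero], by rw [← hom_Y, hY, map_zero]⟩

protected lemma receivesSyzygy {φ : A ⟶ B} (hφ : IsTateInjective φ) :
    ReceivesSyzygy A → ReceivesSyzygy B :=
  fun ⟨a, b, c, hc, ha, hb, hab⟩ ↦ ⟨φ.hom a, φ.hom b, φ.hom c, hφ c hc, by rw [← hom_X, ha],
    by rw [← hom_Y, hb], by simpa using congr(φ.hom $hab)⟩

variable [CharP k 2]

lemma isTateLine {φ : A ⟶ B} {ψ : B ⟶ A} (hφ : IsTateInjective φ) (hψ : IsTateInjective ψ)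
    (hA : IsTateLine A) : IsTateLine B := by
  obtain ⟨v, hv, -⟩ := id hA
  refine ⟨φ.hom v, hφ v hv, fun m hm ↦ ?_⟩
  obtain ⟨n, c, hn⟩ := hA.spansTate (hψ _ (hφ v hv)) (ψ.hom m) (by rw [← hom_Z, hm, map_zero])
  by_contra! h
  refine (hψ (m - c • φ.hom v) ⟨by simp [hm, ← hom_Z, hv.1], fun l hl ↦ h l c ?_⟩).2 n ?_
  · rw [← hl, sub_add_cancel]
  · rw [map_sub, map_smul, hn, add_sub_cancel_right]

end IsTateInjective

/-- The morphism from the trivial representation determined by an invariant element. -/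
def homOfInvariant {m : M} (hm : ∀ g, M.ρ g m = m) : Rep.trivial k G k ⟶ M :=
  Rep.ofHom ⟨LinearMap.toSpanSingleton k M m, fun g ↦ by ext; simp [hm]⟩

lemma isTateInjective_homOfInvariant {m : M} (hm : ∀ g, M.ρ g m = m) (h : IsEssential m) :
    IsTateInjective (homOfInvariant hm) := by
  intro c hc
  have hc0 : (c : k) ≠ 0 := fun h0 ↦ hc.2 0 (h0.trans (map_zero _).symm)
  exact h.smul hc0

omit [QuaternionStructure G] in
lemma mono_homOfInvariant {m : M} (hm : ∀ g, M.ρ g m = m) (h : m ≠ 0) :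
    Mono (homOfInvariant hm) :=
  (Rep.mono_iff_injective _).2 (smul_left_injective k h)

omit [QuaternionStructure G] in
lemma ρ_eq_self_of_iso_trivial (e : M ≅ Rep.trivial k G k) (g : G) (m : M) : M.ρ g m = m :=
  (Rep.mono_iff_injective e.hom).1 inferInstance (Rep.hom_comm_apply e.hom g m)

variable [CharP k 2]

variable (k G) in
lemma isTateLine_trivial : IsTateLine (Rep.trivial k G k) := by
  have hZ (c : Rep.trivial k G k) : Z c = 0 := add_self (M := Rep.trivial k G k) c
  refine ⟨(1 : k), ⟨hZ _, fun n hn ↦ one_ne_zero (α := k) ?_⟩, fun c _ ↦ ⟨0, (c : k), ?_⟩⟩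
  · rw [hn, hZ]
  · rw [map_zero, zero_add]
    exact (mul_one (c : k)).symm

theorem exists_iso_biprod (φ : A ⟶ B) [Mono φ] (hφ : IsTateInjective φ) (hB : IsTateLine B)
    {v : A} (hv : IsEssential v) : ∃ C : Rep.{u} k G, Projective C ∧ Nonempty (B ≅ A ⊞ C) := by
  have hS : (ShortComplex.mk φ (cokernel.π φ) (cokernel.condition φ)).ShortExact :=
    { exact := ShortComplex.exact_cokernel φ
      mono_f := inferInstance
      epi_g := inferInstanceAs (Epi (cokernel.π φ)) }
  have hC : IsAcyclic (cokernel φ) := by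
    intro c hc
    obtain ⟨b, a, rfl, ha⟩ := exists_hom_eq_and_hom_eq_Z hS hc
    have hZa : Z a = 0 := hom_injective hS (by rw [hom_Z, ha, Z_Z, map_zero])
    obtain ⟨n, rfl⟩ : ∃ n, a = Z n := by
      by_contra! h
      exact (hφ a ⟨hZa, h⟩).2 b ha
    obtain ⟨l, d, hl⟩ := (hB.spansTate (hφ v hv)).exists_eq_add (ha.symm.trans (hom_Z φ n))
    refine ⟨(cokernel.π φ).hom l, ?_⟩
    rw [hl, map_add, map_add, map_smul, hom_hom_eq_zero (cokernel.condition φ),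
      hom_hom_eq_zero (cokernel.condition φ), smul_zero, add_zero, zero_add, hom_Z]
  have : Projective (cokernel φ) := hC.projective
  exact ⟨_, this, ⟨(hS.splittingOfProjective).isoBinaryBiproduct⟩⟩

lemma IsTateLine.biprod (hA : IsTateLine A) (hP : IsAcyclic P) : IsTateLine (A ⊞ P) :=
  (IsTateInjective.biprod_inl A P).isTateLine (.biprod_fst hP) hA

lemma IsTateLine.of_iso (hA : IsTateLine A) (e : B ≅ A) : IsTateLine B :=
  (IsTateInjective.of_comp_eq_id e.inv_hom_id).isTateLine (.of_comp_eq_id e.hom_inv_id) hA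

/-- A module of which `M` is a syzygy. -/
noncomputable def cosyzygy (M : Rep.{u} k G) : Rep.{u} k G :=
  cokernel (embedding M)

lemma isSyzygy_cosyzygy (M : Rep.{u} k G) : IsSyzygy M (cosyzygy M) :=
  ⟨_, embedding M, cokernel.π _, cokernel.condition _, (isAcyclic_leftRegular k G).linHom M,
    { exact := ShortComplex.exact_cokernel _
      mono_f := inferInstanceAs (Mono (embedding M))
      epi_g := inferInstanceAs (Epi (cokernel.π _)) }⟩

theorem IsSyzygy.exists_isTateInjective {A' B' : Rep.{u} k G} (hA : IsSyzygy A' A)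
    (hB : IsSyzygy B' B) {φ : A ⟶ B} (hφ : IsTateInjective φ) :
    ∃ φ' : A' ⟶ B', IsTateInjective φ' := by
  obtain ⟨P, f, g, w, hP, hS⟩ := hA
  obtain ⟨Q, f', g', w', hQ, hS'⟩ := hB
  have : Projective P := hP.projective
  have : Mono f' := hS'.mono_f
  have : Epi g' := hS'.epi_g
  let ψ : P ⟶ Q := Projective.factorThru (g ≫ φ) g'
  have hψ : ψ ≫ g' = g ≫ φ := Projective.factorThru_comp _ _
  let φ' : A' ⟶ B' := hS'.exact.lift (f ≫ ψ) (by simp [hψ, reassoc_of% w])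
  have hφ' : φ' ≫ f' = f ≫ ψ := hS'.exact.lift_f _ _
  refine ⟨φ', fun v hv ↦ ?_⟩
  obtain ⟨x, hx⟩ := exists_hom_eq_Z (f := f) hP hv.1
  have hφv : f'.hom (φ'.hom v) = Z (ψ.hom x) := by
    rw [← hom_Z, ← hx]
    exact congr(($hφ').hom v)
  have hψx : g'.hom (ψ.hom x) = φ.hom (g.hom x) := congr(($hψ).hom x)
  rw [isEssential_iff_isEssential_hom hS' hQ hφv, hψx]
  exact hφ _ ((isEssential_iff_isEssential_hom hS hP hx).1 hv)

end Stable

section Endotrivial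

variable {k G : Type} [Field k] [CharP k 2] [Group G] [QuaternionStructure G]
  {A B M : Rep k G}

omit [CharP k 2] [QuaternionStructure G] in
lemma isStablyIso_symm : IsStablyIso A B → IsStablyIso B A :=
  fun ⟨P, Q, hP, hQ, ⟨e⟩⟩ ↦ ⟨Q, P, hQ, hP, ⟨e.symm⟩⟩

lemma exists_isTateInjective_of_isStablyIso (h : IsStablyIso A B) :
    ∃ φ : A ⟶ B, IsTateInjective φ := by
  obtain ⟨P, Q, _, _, ⟨e⟩⟩ := h
  exact ⟨_, ((IsTateInjective.biprod_inl A P).comp (.of_comp_eq_id e.hom_inv_id)).comp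
    (.biprod_fst (isAcyclic_of_projective (P := Q)))⟩

theorem IsTateInjective.isStablyIso {φ : A ⟶ B} (hφ : IsTateInjective φ) (hA : IsTateLine A)
    (hB : IsTateLine B) : IsStablyIso A B := by
  obtain ⟨v, hv, -⟩ := hA
  let P := linHom (Rep.leftRegular k G) A
  have hP : IsAcyclic P := (isAcyclic_leftRegular k G).linHom A
  let f : A ⟶ B ⊞ P := biprod.lift φ (embedding A)
  have : Mono f := mono_of_mono_fac (biprod.lift_snd φ (embedding A))
  have hf : IsTateInjective f := fun v hv ↦ by
    refine .of_hom (φ := biprod.fst) (by rw [← hom_Z, hv.1, map_zero]) ?_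
    have hfv : (biprod.fst : B ⊞ P ⟶ B).hom (f.hom v) = φ.hom v :=
      congr(($(biprod.lift_fst φ (embedding A))).hom v)
    rw [hfv]
    exact hφ v hv
  obtain ⟨C, hC, ⟨e⟩⟩ := exists_iso_biprod f hf (hB.biprod hP) hv
  exact ⟨C, P, hC, hP.projective, ⟨e.symm⟩⟩

theorem isEndotrivial_iff : IsEndotrivial M ↔ FiniteDimensional k M ∧ IsTateLine M := by
  refine and_congr_right fun _ ↦ ⟨fun ⟨P, _, ⟨e⟩⟩ ↦ ?_, fun hM ↦ ?_⟩
  · exact (((isTateLine_trivial k G).biprod isAcyclic_of_projective).of_iso e).of_linHom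
  · obtain ⟨v, hv, -⟩ := id hM
    obtain ⟨c, hc, -⟩ := isTateLine_trivial k G
    let φ : Rep.trivial k G k ⟶ linHom M M := homOfInvariant (linHom_id M)
    have : Mono φ := mono_homOfInvariant _ fun h ↦ hv.id.2 0 (h.trans (map_zero _).symm)
    exact exists_iso_biprod φ (isTateInjective_homOfInvariant _ hv.id) (hM.linHom hM) hc

section Periodicity

variable {n : ℕ} {M : Fin (n + 1) → Rep k G}

lemma isTateLine_of_isSyzygy (h0 : IsTateLine (M 0))
    (hM : ∀ i : Fin n, IsSyzygy (M i.succ) (M i.castSucc)) (i : Fin (n + 1)) :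
    IsTateLine (M i) := by
  induction i using Fin.induction with
  | zero => exact h0
  | succ i ih => exact (hM i).isTateLine_left ih

lemma exists_isTateInjective_of_iterate_cosyzygy
    (hM : ∀ i : Fin n, IsSyzygy (M i.succ) (M i.castSucc)) (i : Fin (n + 1)) (N : Rep k G)
    (h : ∃ φ : M 0 ⟶ cosyzygy^[i] N, IsTateInjective φ) : ∃ φ : M i ⟶ N, IsTateInjective φ := by
  induction i using Fin.induction generalizing N with
  | zero => exact h
  | succ i ih =>
    obtain ⟨φ, hφ⟩ := ih (cosyzygy N) h
    exact (hM i).exists_isTateInjective (isSyzygy_cosyzygy N) hφ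

end Periodicity

lemma exists_isTateInjective_of_receivesTrivial {N : Rep k G} (e : M ≅ Rep.trivial k G k)
    (hN : ReceivesTrivial N) : ∃ φ : M ⟶ N, IsTateInjective φ := by
  obtain ⟨v, hv, hX, hY⟩ := hN
  exact ⟨_, (IsTateInjective.of_comp_eq_id e.hom_inv_id).comp
    (isTateInjective_homOfInvariant (ρ_eq_self hX hY) hv)⟩

lemma IsEven.receivesTrivial_or_receivesTrivial_cosyzygy_cosyzygy
    (hk : ∀ ω : k, ω ^ 3 = 1 → ω = 1) (hM : IsTateLine M) (hEven : IsEven M) :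
    ReceivesTrivial M ∨ ReceivesTrivial (cosyzygy (cosyzygy M)) :=
  (hM.receivesTrivial_or_receivesSecondSyzygy hk hEven).imp_right fun h ↦
    (isSyzygy_cosyzygy _).receivesTrivial_right ((isSyzygy_cosyzygy M).receivesSyzygy_right h)

theorem exists_receivesTrivial_iterate_cosyzygy (hk : ∀ ω : k, ω ^ 3 = 1 → ω = 1)
    (hM : IsTateLine M) : ∃ i : Fin 4, ReceivesTrivial (cosyzygy^[i] M) := by
  have hM' := isSyzygy_cosyzygy M
  have hline := hM'.isTateLine_right hM
  rcases hM'.isEven_or_isEven hline with hEven | hEven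
  · rcases hEven.receivesTrivial_or_receivesTrivial_cosyzygy_cosyzygy hk hM with h | h
    exacts [⟨0, h⟩, ⟨2, h⟩]
  · rcases hEven.receivesTrivial_or_receivesTrivial_cosyzygy_cosyzygy hk hline with h | h
    exacts [⟨1, h⟩, ⟨3, h⟩]

theorem not_isStablyIso_of_isSyzygy {M : Fin 4 → Rep k G} (e : M 0 ≅ Rep.trivial k G k)
    (hM : ∀ i : Fin 3, IsSyzygy (M i.succ) (M i.castSucc)) {i j : Fin 4} (hij : i ≠ j) :
    ¬ IsStablyIso (M i) (M j) := by
  have hline := isTateLine_of_isSyzygy ((isTateLine_trivial k G).of_iso e) hM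
  have htriv (g : G) (m : M 0) : (M 0).ρ g m = m := ρ_eq_self_of_iso_trivial e g m
  have trivial₀ : ReceivesTrivial (M 0) := by
    obtain ⟨v, hv, -⟩ := hline 0
    exact ⟨v, hv, by simp [X, htriv], by simp [Y, htriv]⟩
  have trivial₂ : ¬ ReceivesTrivial (M 2) := (hM 1).not_receivesTrivial (hM 0) htriv
  have syzygy₁ : ReceivesSyzygy (M 1) := (hM 0).receivesSyzygy_left trivial₀
  have syzygy₃ : ¬ ReceivesSyzygy (M 3) := fun h ↦ trivial₂ ((hM 2).receivesTrivial_right h)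
  have even₀ : IsEven (M 0) := trivial₀.imp fun v hv ↦ ⟨hv.1, hv.2.1⟩
  have even₁ : ¬ IsEven (M 1) := fun h ↦ (hM 0).not_isEven (hline 0) h even₀
  have even₂ : IsEven (M 2) := ((hM 1).isEven_or_isEven (hline 1)).resolve_right even₁
  have even₃ : ¬ IsEven (M 3) := fun h ↦ (hM 2).not_isEven (hline 2) h even₂
  intro h
  obtain ⟨φ, hφ⟩ := exists_isTateInjective_of_isStablyIso h
  obtain ⟨ψ, hψ⟩ := exists_isTateInjective_of_isStablyIso (isStablyIso_symm h)
  have hEven : IsEven (M i) ↔ IsEven (M j) := ⟨hφ.isEven, hψ.isEven⟩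
  have hTrivial : ReceivesTrivial (M i) ↔ ReceivesTrivial (M j) :=
    ⟨hφ.receivesTrivial, hψ.receivesTrivial⟩
  have hSyzygy : ReceivesSyzygy (M i) ↔ ReceivesSyzygy (M j) :=
    ⟨hφ.receivesSyzygy, hψ.receivesSyzygy⟩
  fin_cases i <;> fin_cases j <;> simp_all

omit [CharP k 2] [QuaternionStructure G] in
lemma finiteDimensional_of_mono (φ : A ⟶ B) [Mono φ] [FiniteDimensional k B] :
    FiniteDimensional k A :=
  .of_injective φ.hom.toLinearMap ((Rep.mono_iff_injective φ).1 inferInstance)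

end Endotrivial

end Q8Rep

/-- Let `k` be a field of characteristic `2` with no primitive cube root of unity and
`G = Q_8` (`QuaternionGroup 2`). If `M 0` is the trivial module and each `M (i+1)` is a
syzygy of `M i` (i.e. there are short exact sequences `0 → M (i+1) → P i → M i → 0` with
`P i` finite-dimensional projective), then the `M i` are pairwise non-stably-isomorphic
endotrivial modules and every endotrivial module is stably isomorphic to some `M i`;
hence `T(Q_8) = Pic(StMod(kQ_8))` is cyclic of order `4`. -/
theorem endotrivial_group_of_quaternion_no_cube_root
    (k : Type) [Field k] [CharP k 2] (hk : ∀ ω : k, ω ^ 3 = 1 → ω = 1)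
    (G : Type) [Group G] (e : G ≃* QuaternionGroup 2)
    (M : Fin 4 → Rep k G)
    (hM0 : Nonempty (M 0 ≅ Rep.trivial k G k))
    (hseq : ∀ i : Fin 3, ∃ (P : Rep k G) (_ : Projective P) (_ : FiniteDimensional k P.V)
      (f : M i.succ ⟶ P) (g : P ⟶ M i.castSucc) (w : f ≫ g = 0),
      (ShortComplex.mk f g w).ShortExact) :
    (∀ i : Fin 4, IsEndotrivial (M i)) ∧
      (∀ i j : Fin 4, i ≠ j → ¬ IsStablyIso (M i) (M j)) ∧
      (∀ N : Rep k G, IsEndotrivial N → ∃ i : Fin 4, IsStablyIso N (M i)) := by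
  let : Q8Rep.QuaternionStructure G := ⟨e⟩
  obtain ⟨e₀⟩ := hM0
  have hsyz (i : Fin 3) : Q8Rep.IsSyzygy (M i.succ) (M i.castSucc) := by
    obtain ⟨P, _, _, f, g, w, hS⟩ := hseq i
    exact ⟨P, f, g, w, Q8Rep.isAcyclic_of_projective, hS⟩
  have hline : ∀ i, Q8Rep.IsTateLine (M i) :=
    Q8Rep.isTateLine_of_isSyzygy ((Q8Rep.isTateLine_trivial k G).of_iso e₀) hsyz
  have hfin (i : Fin 4) : FiniteDimensional k (M i) := by
    cases i using Fin.cases with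
    | zero => exact Q8Rep.finiteDimensional_of_mono e₀.hom
    | succ i =>
      obtain ⟨P, _, _, f, g, w, hS⟩ := hseq i
      have : Mono f := hS.mono_f
      exact Q8Rep.finiteDimensional_of_mono f
  refine ⟨fun i ↦ Q8Rep.isEndotrivial_iff.2 ⟨hfin i, hline i⟩,
    fun i j hij ↦ Q8Rep.not_isStablyIso_of_isSyzygy e₀ hsyz hij, fun N hN ↦ ?_⟩
  have hN' : Q8Rep.IsTateLine N := (Q8Rep.isEndotrivial_iff.1 hN).2
  obtain ⟨i, hi⟩ := Q8Rep.exists_receivesTrivial_iterate_cosyzygy hk hN'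
  obtain ⟨φ, hφ⟩ := Q8Rep.exists_isTateInjective_of_iterate_cosyzygy hsyz i N
    (Q8Rep.exists_isTateInjective_of_receivesTrivial e₀ hi)
  exact ⟨i, Q8Rep.isStablyIso_symm (hφ.isStablyIso (hline i) hN')⟩
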